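/- The parallel surface x* = x + ρ n of M satisfies Δ^{III} x* = Δ^{III} x + 2ρ n on U, where Δ^{III} is the second Beltrami operator of the common third fundamental form of M and its parallel surface. -/

import Mathlib

open Matrix

noncomputable section

/-- The parameter domain `ℝ²`. -/
abbrev Param : Type := Fin 2 → ℝ

/-- Vectors in Euclidean 3-space. -/
abbrev Vec3 : Type := Fin 3 → ℝ

/-- Partial derivative of a vector-valued function in the `i`-th coordinate direction. -/
noncomputable def pd (i : Fin 2) (f : Param → Vec3) (u : Param) : Vec3 :=
  fderiv ℝ f u (Pi.single i 1)

/-- Partial derivative of a scalar function in the `i`-th coordinate direction. -/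
noncomputable def pds (i : Fin 2) (f : Param → ℝ) (u : Param) : ℝ :=
  fderiv ℝ f u (Pi.single i 1)

/-- The Euclidean inner product on `ℝ³`. -/
def dot3 (a b : Vec3) : ℝ := ∑ k, a k * b k

/-- The Euclidean norm on `ℝ³`. -/
noncomputable def norm3 (a : Vec3) : ℝ := Real.sqrt (dot3 a a)

/-- The Gauss map `n = (x_{/1} × x_{/2}) / ‖x_{/1} × x_{/2}‖`. -/
noncomputable def gaussMap (x : Param → Vec3) (u : Param) : Vec3 :=
  (norm3 (crossProduct (pd 0 x u) (pd 1 x u)))⁻¹ • crossProduct (pd 0 x u) (pd 1 x u)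

/-- Components `g_{ij}` of the first fundamental form. -/
noncomputable def fformI (x : Param → Vec3) (u : Param) : Matrix (Fin 2) (Fin 2) ℝ :=
  Matrix.of fun i j => dot3 (pd i x u) (pd j x u)

/-- Components `b_{ij} = ⟨∂²x/∂u^i∂u^j, n⟩` of the second fundamental form. -/
noncomputable def fformII (x : Param → Vec3) (u : Param) : Matrix (Fin 2) (Fin 2) ℝ :=
  Matrix.of fun i j => dot3 (pd i (pd j x) u) (gaussMap x u)

/-- Components `e_{ij} = ⟨n_{/i}, n_{/j}⟩` of the third fundamental form. -/
noncomputable def fformIII (x : Param → Vec3) (u : Param) : Matrix (Fin 2) (Fin 2) ℝ :=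
  Matrix.of fun i j => dot3 (pd i (gaussMap x) u) (pd j (gaussMap x) u)

/-- The Gauss curvature `K = det(b_{ij}) / det(g_{ij})`. -/
noncomputable def gaussCurv (x : Param → Vec3) (u : Param) : ℝ :=
  (fformII x u).det / (fformI x u).det

/-- The mean curvature `H = (1/2) g^{ij} b_{ij}`. -/
noncomputable def meanCurv (x : Param → Vec3) (u : Param) : ℝ :=
  (1 / 2) * ∑ i, ∑ j, (fformI x u)⁻¹ i j * fformII x u i j

/-- First Beltrami operator `∇^J(φ, ψ) = a^{ij} φ_{/i} ψ_{/j}` with respect to the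
fundamental form with component matrix `a`, for scalar `φ` and `ℝ³`-valued `ψ`. -/
noncomputable def beltrami1 (a : Param → Matrix (Fin 2) (Fin 2) ℝ)
    (φ : Param → ℝ) (ψ : Param → Vec3) (u : Param) : Vec3 :=
  ∑ i, ∑ j, ((a u)⁻¹ i j * pds i φ u) • pd j ψ u

/-- Second Beltrami operator
`Δ^J f = −(1/√|det a|) ∂_i (√|det a| a^{ij} ∂_j f)` with respect to the fundamental
form with component matrix `a`, acting componentwise on `ℝ³`-valued functions. -/
noncomputable def beltrami2 (a : Param → Matrix (Fin 2) (Fin 2) ℝ)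
    (f : Param → Vec3) (u : Param) : Vec3 :=
  -((Real.sqrt |(a u).det|)⁻¹ •
    ∑ i, ∑ j, pd i (fun v => (Real.sqrt |(a v).det| * (a v)⁻¹ i j) • pd j f v) u)

/-- `x` is an immersion on `U`: the partial derivatives are linearly independent. -/
def Immersed (x : Param → Vec3) (U : Set Param) : Prop :=
  ∀ u ∈ U, LinearIndependent ℝ ![pd 0 x u, pd 1 x u]

/-- `f` is nonconstant on `U`. -/
def NonconstOn (f : Param → Vec3) (U : Set Param) : Prop :=
  ¬ ∃ v : Vec3, ∀ u ∈ U, f u = v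

open scoped ContDiff

lemma aux_pd_smooth {f : Param → Vec3} {u : Param} (i : Fin 2) (hf : ContDiffAt ℝ ∞ f u) :
    ContDiffAt ℝ ∞ (pd i f) u := by
  have h : ContDiffAt ℝ ∞ (fderiv ℝ f) u := hf.fderiv_right (by simp)
  exact h.clm_apply contDiffAt_const

lemma aux_comp {f : Param → Vec3} {u : Param} (hf : ContDiffAt ℝ ∞ f u) (k : Fin 3) :
    ContDiffAt ℝ ∞ (fun v => f v k) u := contDiffAt_pi.1 hf k

lemma aux_dot_smooth {f g : Param → Vec3} {u : Param} (hf : ContDiffAt ℝ ∞ f u)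
    (hg : ContDiffAt ℝ ∞ g u) : ContDiffAt ℝ ∞ (fun v => dot3 (f v) (g v)) u := by
  unfold dot3
  exact ContDiffAt.sum fun k _ => (aux_comp hf k).mul (aux_comp hg k)

lemma aux_cross_smooth {f g : Param → Vec3} {u : Param} (hf : ContDiffAt ℝ ∞ f u)
    (hg : ContDiffAt ℝ ∞ g u) : ContDiffAt ℝ ∞ (fun v => crossProduct (f v) (g v)) u := by
  rw [contDiffAt_pi]
  have F := aux_comp hf
  have G := aux_comp hg
  intro k
  fin_cases k <;> simp [cross_apply]
  · exact ((F 1).mul (G 2)).sub ((F 2).mul (G 1))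
  · exact ((F 2).mul (G 0)).sub ((F 0).mul (G 2))
  · exact ((F 0).mul (G 1)).sub ((F 1).mul (G 0))

lemma aux_diff {f : Param → Vec3} {u : Param} (hf : ContDiffAt ℝ ∞ f u) :
    DifferentiableAt ℝ f u := hf.differentiableAt (by simp)

lemma aux_diffc {f : Param → Vec3} {u : Param} (hf : DifferentiableAt ℝ f u) (k : Fin 3) :
    DifferentiableAt ℝ (fun v => f v k) u := differentiableAt_pi.1 hf k

lemma aux_pd_comp {f : Param → Vec3} {u : Param} (hf : DifferentiableAt ℝ f u) (i : Fin 2)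
    (k : Fin 3) : pd i f u k = pds i (fun v => f v k) u := by
  unfold pd pds
  rw [fderiv_pi (fun k => aux_diffc hf k)]
  rfl

lemma aux_pds_mul {f g : Param → ℝ} {u : Param} (hf : DifferentiableAt ℝ f u)
    (hg : DifferentiableAt ℝ g u) (i : Fin 2) :
    pds i (fun v => f v * g v) u = pds i f u * g u + f u * pds i g u := by
  unfold pds
  rw [fderiv_fun_mul hf hg]
  simp
  ring

lemma aux_pds_add {f g : Param → ℝ} {u : Param} (hf : DifferentiableAt ℝ f u)
    (hg : DifferentiableAt ℝ g u) (i : Fin 2) :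
    pds i (fun v => f v + g v) u = pds i f u + pds i g u := by
  unfold pds
  rw [fderiv_fun_add hf hg]
  simp

lemma aux_pds_sub {f g : Param → ℝ} {u : Param} (hf : DifferentiableAt ℝ f u)
    (hg : DifferentiableAt ℝ g u) (i : Fin 2) :
    pds i (fun v => f v - g v) u = pds i f u - pds i g u := by
  unfold pds
  rw [fderiv_fun_sub hf hg]
  simp

lemma aux_pds_dot {f g : Param → Vec3} {u : Param} (hf : DifferentiableAt ℝ f u)
    (hg : DifferentiableAt ℝ g u) (i : Fin 2) :
    pds i (fun v => dot3 (f v) (g v)) u = dot3 (pd i f u) (g u) + dot3 (f u) (pd i g u) := by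
  have F := aux_diffc hf
  have G := aux_diffc hg
  simp only [dot3, Fin.sum_univ_three, aux_pd_comp hf, aux_pd_comp hg]
  rw [aux_pds_add (((F 0).fun_mul (G 0)).fun_add ((F 1).fun_mul (G 1))) ((F 2).fun_mul (G 2)),
    aux_pds_add ((F 0).fun_mul (G 0)) ((F 1).fun_mul (G 1)),
    aux_pds_mul (F 0) (G 0), aux_pds_mul (F 1) (G 1), aux_pds_mul (F 2) (G 2)]
  ring

lemma aux_pd_cross {f g : Param → Vec3} {u : Param} (hf : ContDiffAt ℝ ∞ f u)
    (hg : ContDiffAt ℝ ∞ g u) (i : Fin 2) :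
    pd i (fun v => crossProduct (f v) (g v)) u =
      crossProduct (pd i f u) (g u) + crossProduct (f u) (pd i g u) := by
  have F := aux_diffc (aux_diff hf)
  have G := aux_diffc (aux_diff hg)
  ext k
  rw [aux_pd_comp (aux_diff (aux_cross_smooth hf hg))]
  simp only [Pi.add_apply, cross_apply]
  fin_cases k <;> simp [aux_pd_comp (aux_diff hf), aux_pd_comp (aux_diff hg)]
  · rw [aux_pds_sub ((F 1).fun_mul (G 2)) ((F 2).fun_mul (G 1)), aux_pds_mul (F 1) (G 2),
      aux_pds_mul (F 2) (G 1)]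
    ring
  · rw [aux_pds_sub ((F 2).fun_mul (G 0)) ((F 0).fun_mul (G 2)), aux_pds_mul (F 2) (G 0),
      aux_pds_mul (F 0) (G 2)]
    ring
  · rw [aux_pds_sub ((F 0).fun_mul (G 1)) ((F 1).fun_mul (G 0)), aux_pds_mul (F 0) (G 1),
      aux_pds_mul (F 1) (G 0)]
    ring

lemma aux_pd_add {f g : Param → Vec3} {u : Param} (hf : DifferentiableAt ℝ f u)
    (hg : DifferentiableAt ℝ g u) (i : Fin 2) :
    pd i (fun v => f v + g v) u = pd i f u + pd i g u := by
  unfold pd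
  rw [fderiv_fun_add hf hg]
  simp

lemma aux_pd_smul {f : Param → Vec3} {u : Param} (hf : DifferentiableAt ℝ f u) (c : ℝ)
    (i : Fin 2) : pd i (fun v => c • f v) u = c • pd i f u := by
  unfold pd
  rw [fderiv_fun_const_smul hf]
  simp

lemma aux_pd_congr {f g : Param → Vec3} {u : Param} (h : f =ᶠ[nhds u] g) (i : Fin 2) :
    pd i f u = pd i g u := by
  unfold pd
  rw [h.fderiv_eq]

lemma aux_pd_symm {f : Param → Vec3} {u : Param} (hf : ContDiffAt ℝ ∞ f u) (i j : Fin 2) :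
    pd i (pd j f) u = pd j (pd i f) u := by
  have h : DifferentiableAt ℝ (fderiv ℝ f) u :=
    (hf.fderiv_right (m := ∞) (by simp)).differentiableAt (by simp)
  have hs : IsSymmSndFDerivAt ℝ f u := hf.isSymmSndFDerivAt (by
    simp only [minSmoothness_of_isRCLikeNormedField]
    exact WithTop.coe_le_coe.2 le_top)
  have key : ∀ i j, pd i (pd j f) u =
      fderiv ℝ (fderiv ℝ f) u (Pi.single i 1) (Pi.single j 1) := by
    intro i j
    have : pd j f = fun v => fderiv ℝ f v (Pi.single j 1) := rfl
    rw [this]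
    unfold pd
    rw [fderiv_clm_apply h (differentiableAt_const _)]
    simp
  rw [key, key]
  exact hs _ _

lemma aux_dot_self_pos {a : Vec3} (h : a ≠ 0) : 0 < dot3 a a := by
  have h0 : dot3 a a = a ⬝ᵥ a := rfl
  rw [h0]
  have := dotProduct_self_star_pos_iff.2 h
  simpa using this

section main

variable {U : Set Param} {x : Param → Vec3}

lemma aux_gauss (hx : ∀ u ∈ U, ContDiffAt ℝ ∞ x u) (himm : Immersed x U) :
    ∀ u ∈ U, ContDiffAt ℝ ∞ (gaussMap x) u ∧ dot3 (gaussMap x u) (gaussMap x u) = 1 ∧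
      (∀ j, dot3 (pd j x u) (gaussMap x u) = 0) := by
  intro u hu
  have hc : crossProduct (pd 0 x u) (pd 1 x u) ≠ 0 :=
    crossProduct_ne_zero_iff_linearIndependent.2 (himm u hu)
  have hp := aux_dot_self_pos hc
  have hcs := aux_cross_smooth (aux_pd_smooth 0 (hx u hu)) (aux_pd_smooth 1 (hx u hu))
  have hn : norm3 (crossProduct (pd 0 x u) (pd 1 x u)) ≠ 0 := (Real.sqrt_pos.2 hp).ne'
  have hn2 : norm3 (crossProduct (pd 0 x u) (pd 1 x u)) ^ 2 =
    dot3 (crossProduct (pd 0 x u) (pd 1 x u)) (crossProduct (pd 0 x u) (pd 1 x u)) :=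
    Real.sq_sqrt hp.le
  refine ⟨?_, ?_, ?_⟩
  · have h1 : ContDiffAt ℝ ∞ (fun v => norm3 (crossProduct (pd 0 x v) (pd 1 x v))) u :=
      (aux_dot_smooth hcs hcs).sqrt hp.ne'
    exact (h1.inv hn).smul hcs
  · unfold gaussMap
    generalize norm3 (crossProduct (pd 0 x u) (pd 1 x u)) = r at *
    generalize crossProduct (pd 0 x u) (pd 1 x u) = c at *
    have : dot3 (r⁻¹ • c) (r⁻¹ • c) = (r⁻¹)^2 * dot3 c c := by
      simp [dot3, Fin.sum_univ_three]; ring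
    rw [this, ← hn2]
    field_simp
  · intro j
    unfold gaussMap
    generalize norm3 (crossProduct (pd 0 x u) (pd 1 x u)) = r at *
    fin_cases j <;> simp [dot3, Fin.sum_univ_three, cross_apply] <;> ring

/-- purely algebraic facts about the Gauss map frame -/
lemma aux_alg (n a b : Vec3) (h1 : dot3 n n = 1) (ha : dot3 a n = 0) (hb : dot3 b n = 0) :
    crossProduct a b = dot3 (crossProduct a b) n • n := by
  have e1 : crossProduct n (crossProduct a b) = 0 := by
    have : crossProduct n (crossProduct a b) = dot3 b n • a - dot3 a n • b := by
      ext k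
      fin_cases k <;> simp [dot3, Fin.sum_univ_three, cross_apply] <;> ring
    rw [this, ha, hb]; simp
  have e2 : crossProduct (crossProduct n (crossProduct a b)) n =
      dot3 n n • crossProduct a b - dot3 (crossProduct a b) n • n := by
    generalize crossProduct a b = c
    ext k
    fin_cases k <;> simp [dot3, Fin.sum_univ_three, cross_apply] <;> ring
  rw [e1, h1] at e2
  simp only [one_smul, map_zero, LinearMap.zero_apply] at e2
  exact (sub_eq_zero.1 e2.symm)

lemma aux_lagr (a b c d : Vec3) : dot3 (crossProduct a b) (crossProduct c d) =
    dot3 a c * dot3 b d - dot3 a d * dot3 b c := by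
  simp [dot3, Fin.sum_univ_three, cross_apply]; ring

lemma aux_n_orth (hU : IsOpen U) (hx : ∀ u ∈ U, ContDiffAt ℝ ∞ x u) (himm : Immersed x U) :
    ∀ u ∈ U, ∀ i, dot3 (pd i (gaussMap x) u) (gaussMap x u) = 0 := by
  intro u hu i
  have hd := aux_diff (aux_gauss hx himm u hu).1
  have h := aux_pds_dot hd hd i
  have hc : (fun v => dot3 (gaussMap x v) (gaussMap x v)) =ᶠ[nhds u] fun _ => 1 := by
    filter_upwards [hU.mem_nhds hu] with v hv using (aux_gauss hx himm v hv).2.1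
  have h0 : pds i (fun v => dot3 (gaussMap x v) (gaussMap x v)) u = 0 := by
    unfold pds
    rw [hc.fderiv_eq]; simp
  rw [h0] at h
  have hs : dot3 (gaussMap x u) (pd i (gaussMap x) u) =
    dot3 (pd i (gaussMap x) u) (gaussMap x u) := by
    simp [dot3, mul_comm]
  rw [hs] at h
  linarith

lemma aux_b (hU : IsOpen U) (hx : ∀ u ∈ U, ContDiffAt ℝ ∞ x u) (himm : Immersed x U) :
    ∀ u ∈ U, ∀ i j, fformII x u i j = - dot3 (pd j x u) (pd i (gaussMap x) u) := by
  intro u hu i j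
  have h := aux_pds_dot (aux_diff (aux_pd_smooth j (hx u hu)))
    (aux_diff (aux_gauss hx himm u hu).1) i
  have hc : (fun v => dot3 (pd j x v) (gaussMap x v)) =ᶠ[nhds u] fun _ => 0 := by
    filter_upwards [hU.mem_nhds hu] with v hv using (aux_gauss hx himm v hv).2.2 j
  have h0 : pds i (fun v => dot3 (pd j x v) (gaussMap x v)) u = 0 := by
    unfold pds
    rw [hc.fderiv_eq]; simp
  rw [h0] at h
  simp only [fformII, Matrix.of_apply]
  linarith

lemma aux_cross_ne (hU : IsOpen U) (hx : ∀ u ∈ U, ContDiffAt ℝ ∞ x u) (himm : Immersed x U)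
    (hpar : ∀ u ∈ U, (fformII x u).det ≠ 0) :
    ∀ u ∈ U, crossProduct (pd 0 (gaussMap x) u) (pd 1 (gaussMap x) u) ≠ 0 := by
  intro u hu h
  apply hpar u hu
  have := aux_lagr (pd 0 x u) (pd 1 x u) (pd 0 (gaussMap x) u) (pd 1 (gaussMap x) u)
  rw [h] at this
  have h0 : ∀ a, dot3 a 0 = 0 := by intro a; simp [dot3]
  rw [h0] at this
  rw [Matrix.det_fin_two]
  simp only [aux_b hU hx himm u hu]
  linarith

lemma aux_dete (u : Param) : (fformIII x u).det =
    dot3 (crossProduct (pd 0 (gaussMap x) u) (pd 1 (gaussMap x) u))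
      (crossProduct (pd 0 (gaussMap x) u) (pd 1 (gaussMap x) u)) := by
  rw [aux_lagr, Matrix.det_fin_two]
  simp only [fformIII, Matrix.of_apply]

lemma aux_inv (A : Matrix (Fin 2) (Fin 2) ℝ) :
    A⁻¹ = A.det⁻¹ • !![A 1 1, -A 0 1; -A 1 0, A 0 0] := by
  rw [Matrix.inv_def, Matrix.adjugate_fin_two, Ring.inverse_eq_inv']

lemma aux_coef_smooth (hU : IsOpen U) (hx : ∀ u ∈ U, ContDiffAt ℝ ∞ x u) (himm : Immersed x U)
    (hpar : ∀ u ∈ U, (fformII x u).det ≠ 0) (u : Param) (hu : u ∈ U) (i j : Fin 2) :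
    ContDiffAt ℝ ∞ (fun v => Real.sqrt |(fformIII x v).det| * (fformIII x v)⁻¹ i j) u := by
  have hn := (aux_gauss hx himm u hu).1
  have he : ∀ i j, ContDiffAt ℝ ∞ (fun v => fformIII x v i j) u := by
    intro i j
    exact aux_dot_smooth (aux_pd_smooth i hn) (aux_pd_smooth j hn)
  have hd : ContDiffAt ℝ ∞ (fun v => (fformIII x v).det) u := by
    simp only [Matrix.det_fin_two]
    exact ((he 0 0).mul (he 1 1)).sub ((he 0 1).mul (he 1 0))
  have hp : 0 < (fformIII x u).det := by
    rw [aux_dete]; exact aux_dot_self_pos (aux_cross_ne hU hx himm hpar u hu)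
  refine ContDiffAt.mul ?_ ?_
  · have : ContDiffAt ℝ ∞ (fun v => |(fformIII x v).det|) u := hd.abs hp.ne'
    exact this.sqrt (abs_ne_zero.2 hp.ne')
  · simp only [aux_inv, Matrix.smul_apply, smul_eq_mul]
    refine (hd.inv hp.ne').mul ?_
    fin_cases i <;> fin_cases j <;> simp
    · exact he 1 1
    · exact (he 0 1).neg
    · exact (he 1 0).neg
    · exact he 0 0

/-- the Gauss map is an eigenvector -/
lemma aux_eigen (hU : IsOpen U) (hx : ∀ u ∈ U, ContDiffAt ℝ ∞ x u) (himm : Immersed x U)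
    (hpar : ∀ u ∈ U, (fformII x u).det ≠ 0) (u : Param) (hu : u ∈ U) :
    beltrami2 (fformIII x) (gaussMap x) u = (2 : ℝ) • gaussMap x u := by
  set n := gaussMap x with hn
  have hns : ∀ v ∈ U, ContDiffAt ℝ ∞ n v := fun v hv => (aux_gauss hx himm v hv).1
  set s : Param → ℝ := fun v => dot3 (crossProduct (pd 0 n v) (pd 1 n v)) (n v) with hs
  have hsn : ∀ v ∈ U, crossProduct (pd 0 n v) (pd 1 n v) = s v • n v := fun v hv =>
    aux_alg _ _ _ (aux_gauss hx himm v hv).2.1 (aux_n_orth hU hx himm v hv 0)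
      (aux_n_orth hU hx himm v hv 1)
  have hs0 : ∀ v ∈ U, s v ≠ 0 := by
    intro v hv h
    apply aux_cross_ne hU hx himm hpar v hv
    rw [hsn v hv, h, zero_smul]
  have hdet : ∀ v ∈ U, (fformIII x v).det = s v ^ 2 := by
    intro v hv
    have h1 : dot3 (s v • n v) (s v • n v) = s v ^ 2 * dot3 (n v) (n v) := by
      simp [dot3, Fin.sum_univ_three]; ring
    rw [aux_dete, ← hn, hsn v hv, h1, (aux_gauss hx himm v hv).2.1, mul_one]
  have hW : ∀ v ∈ U, Real.sqrt |(fformIII x v).det| = |s v| := by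
    intro v hv
    rw [hdet v hv, abs_of_nonneg (sq_nonneg _), Real.sqrt_sq_eq_abs]
  have hsc : ContinuousAt s u :=
    (aux_dot_smooth (aux_cross_smooth (aux_pd_smooth 0 (hns u hu)) (aux_pd_smooth 1 (hns u hu)))
      (hns u hu)).continuousAt
  obtain ⟨σ, hσ, hev⟩ : ∃ σ : ℝ, σ * σ = 1 ∧ ∀ᶠ v in nhds u, |s v| = σ * s v := by
    rcases lt_or_gt_of_ne (hs0 u hu) with h | h
    · refine ⟨-1, by norm_num, ?_⟩
      filter_upwards [hsc.eventually_lt continuousAt_const h] with v hv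
      rw [abs_of_neg hv]; ring
    · refine ⟨1, by norm_num, ?_⟩
      filter_upwards [continuousAt_const.eventually_lt hsc h] with v hv
      rw [abs_of_pos hv]; ring
  -- the two fluxes
  have hfl : ∀ᶠ v in nhds u,
      ((Real.sqrt |(fformIII x v).det| * (fformIII x v)⁻¹ 0 0) • pd 0 n v +
        (Real.sqrt |(fformIII x v).det| * (fformIII x v)⁻¹ 0 1) • pd 1 n v =
        σ • crossProduct (pd 1 n v) (n v)) ∧
      ((Real.sqrt |(fformIII x v).det| * (fformIII x v)⁻¹ 1 0) • pd 0 n v +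
        (Real.sqrt |(fformIII x v).det| * (fformIII x v)⁻¹ 1 1) • pd 1 n v =
        (-σ) • crossProduct (pd 0 n v) (n v)) := by
    filter_upwards [hev, hU.mem_nhds hu] with v hv hvU
    have hcr := hsn v hvU
    have hsv := hs0 v hvU
    have k1 : crossProduct (pd 1 n v) (crossProduct (pd 0 n v) (pd 1 n v)) =
        dot3 (pd 1 n v) (pd 1 n v) • pd 0 n v - dot3 (pd 0 n v) (pd 1 n v) • pd 1 n v := by
      ext k
      fin_cases k <;> simp [dot3, Fin.sum_univ_three, cross_apply] <;> ring
    have k2 : crossProduct (pd 0 n v) (crossProduct (pd 0 n v) (pd 1 n v)) =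
        dot3 (pd 1 n v) (pd 0 n v) • pd 0 n v - dot3 (pd 0 n v) (pd 0 n v) • pd 1 n v := by
      ext k
      fin_cases k <;> simp [dot3, Fin.sum_univ_three, cross_apply] <;> ring
    rw [hcr, map_smul] at k1 k2
    rw [hW v hvU, aux_inv, hdet v hvU, hv]
    have E : ∀ i j, fformIII x v i j = dot3 (pd i n v) (pd j n v) := fun i j => rfl
    simp only [E, Matrix.smul_apply, smul_eq_mul, Matrix.of_apply, Matrix.cons_val', Matrix.cons_val_zero,
      Matrix.cons_val_one, Matrix.cons_val_fin_one]
    constructor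
    · have : crossProduct (pd 1 n v) (n v) = (s v)⁻¹ • (s v • crossProduct (pd 1 n v) (n v)) := by
        rw [smul_smul, inv_mul_cancel₀ hsv, one_smul]
      rw [this, k1]
      ext k
      simp
      field_simp
      ring
    · have : crossProduct (pd 0 n v) (n v) = (s v)⁻¹ • (s v • crossProduct (pd 0 n v) (n v)) := by
        rw [smul_smul, inv_mul_cancel₀ hsv, one_smul]
      rw [this, k2]
      ext k
      simp
      field_simp
      ring
  have hcd : ∀ i j, DifferentiableAt ℝ
      (fun v => (Real.sqrt |(fformIII x v).det| * (fformIII x v)⁻¹ i j) • pd j n v) u :=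
    fun i j => aux_diff ((aux_coef_smooth hU hx himm hpar u hu i j).smul
      (aux_pd_smooth j (hns u hu)))
  have P := fun i => aux_pd_smooth i (hns u hu)
  unfold beltrami2
  simp only [Fin.sum_univ_two]
  rw [← aux_pd_add (hcd 0 0) (hcd 0 1), ← aux_pd_add (hcd 1 0) (hcd 1 1),
    aux_pd_congr (hfl.mono fun v h => h.1), aux_pd_congr (hfl.mono fun v h => h.2),
    aux_pd_smul (aux_diff (aux_cross_smooth (P 1) (hns u hu))),
    aux_pd_smul (aux_diff (aux_cross_smooth (P 0) (hns u hu))),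
    aux_pd_cross (P 1) (hns u hu), aux_pd_cross (P 0) (hns u hu),
    aux_pd_symm (hns u hu) 1 0, ← cross_anticomm (pd 0 n u) (pd 1 n u), hsn u hu, hW u hu,
    hev.self_of_nhds]
  have hσ0 : σ ≠ 0 := by rintro rfl; simp at hσ
  have hsu := hs0 u hu
  ext k
  simp
  field_simp
  ring

end main

/-- the parallel surface `x* = x + ρ n` satisfies
`Δ^{III} x* = Δ^{III} x + 2ρ n` on `U`, where `Δ^{III}` is the second Beltrami operator
of the common third fundamental form. -/
theorem stmt16 (U : Set Param) (x : Param → Vec3)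
    (hU : IsOpen U) (hUconn : IsConnected U)
    (hx : ContDiffOn ℝ (⊤ : ℕ∞) x U) (himm : Immersed x U)
    (hpar : ∀ u ∈ U, (fformII x u).det ≠ 0)
    (ρ : ℝ) (hρ : ρ ≠ 0)
    (hreg : ∀ u ∈ U, 1 - 2 * ρ * meanCurv x u + ρ ^ 2 * gaussCurv x u ≠ 0) :
    ∀ u ∈ U,
      beltrami2 (fformIII x) (fun v => x v + ρ • gaussMap x v) u =
        beltrami2 (fformIII x) x u + (2 * ρ) • gaussMap x u := by
  have hx' : ∀ u ∈ U, ContDiffAt ℝ ∞ x u := fun u hu => hx.contDiffAt (hU.mem_nhds hu)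
  intro u hu
  have hn : ∀ u ∈ U, ContDiffAt ℝ ∞ (gaussMap x) u := fun u hu => (aux_gauss hx' himm u hu).1
  have key : ∀ i j, pd i (fun v => (Real.sqrt |(fformIII x v).det| * (fformIII x v)⁻¹ i j) •
        pd j (fun v => x v + ρ • gaussMap x v) v) u =
      pd i (fun v => (Real.sqrt |(fformIII x v).det| * (fformIII x v)⁻¹ i j) • pd j x v) u +
      ρ • pd i (fun v => (Real.sqrt |(fformIII x v).det| * (fformIII x v)⁻¹ i j) •
        pd j (gaussMap x) v) u := by
    intro i j
    have hc := aux_coef_smooth hU hx' himm hpar u hu i j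
    have d1 := aux_diff (hc.smul (aux_pd_smooth j (hx' u hu)))
    have d2 := aux_diff (hc.smul (aux_pd_smooth j (hn u hu)))
    have d3 := d2.const_smul ρ
    have e := aux_pd_add d1 d3 i
    have e2 := aux_pd_smul d2 ρ i
    refine Eq.trans ?_ (e.trans (congrArg₂ _ rfl e2))
    apply aux_pd_congr
    filter_upwards [hU.mem_nhds hu] with v hv
    have hd := aux_diff (hn v hv)
    rw [aux_pd_add (aux_diff (hx' v hv)) (hd.fun_const_smul ρ), aux_pd_smul hd, smul_add,
      smul_comm _ ρ]
    rfl
  have he := aux_eigen hU hx' himm hpar u hu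
  have : (2 * ρ) • gaussMap x u = ρ • beltrami2 (fformIII x) (gaussMap x) u := by
    rw [he, smul_smul, mul_comm]
  rw [this]
  unfold beltrami2
  simp only [key, Fin.sum_univ_two]
  module
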